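/- Let U ⊆ ℝ² be open, let u : ℝ² → ℝ be real-analytic on U, let z₀ ∈ U satisfy ∇u(z₀) = 0, and let σ > 0 be such that the closed ball of radius σ around z₀ is contained in U. Let K ⊆ ℝ² be an open set with u(z) ≥ u(z₀) for all z ∈ K, and let γ₁, γ₂ : [0,∞) → ℝ² be differentiable curves with γᵢ′(t) = −∇u(γᵢ(t)) for all t ≥ 0 and γᵢ(t) → z₀ as t → +∞ (i = 1,2), such that the ranges of γ₁ and γ₂ are contained in the frontier of K and the intersection of the frontier of K with the open ball of radius σ around z₀ is contained in (range γ₁) ∪ (range γ₂) ∪ {z₀}. Then for every ε ∈ (0,σ] there exists δ > 0 such that: for every z in the intersection of K with the open ball of radius δ around z₀, every T ∈ (0,∞], and every differentiable γ : [0,T) → ℝ² with γ(0) = z and γ′(t) = −∇u(γ(t)) for all t ∈ [0,T), one has γ(t) ∈ K and ‖γ(t) − z₀‖ < ε for all t ∈ [0,T); moreover, if T = ∞, then γ(t) converges as t → +∞ to a point of closure(K) with distance at most ε from z₀. -/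

import Mathlib

open Metric Set Filter Topology MeasureTheory

noncomputable section

abbrev E2 := EuclideanSpace ℝ (Fin 2)


/-- Local Kurdyka-Łojasiewicz property. -/
def GoodPt (u : E2 → ℝ) (p : E2) : Prop :=
  ∃ c > 0, ∃ θ : ℝ, 0 < θ ∧ θ < 1 ∧ ∀ᶠ z in 𝓝 p, c * |u z - u p| ^ θ ≤ ‖gradient u z‖

/-- Iterated directional derivatives. -/
def dirD (u : E2 → ℝ) (v : E2) : ℕ → E2 → ℝ
  | 0 => u
  | n + 1 => fun z => fderiv ℝ (dirD u v n) z v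

lemma norm_gradient_eq (u : E2 → ℝ) (z : E2) : ‖gradient u z‖ = ‖fderiv ℝ u z‖ := by
  simp [gradient]

lemma dirD_analyticAt {u : E2 → ℝ} {z : E2} (v : E2) (h : AnalyticAt ℝ u z) (n : ℕ) :
    AnalyticAt ℝ (dirD u v n) z := by
  induction n with
  | zero => exact h
  | succ n ih =>
    exact ((ContinuousLinearMap.apply ℝ ℝ v).analyticAt _).comp ih.fderiv

lemma dirD_line {u : E2 → ℝ} {z v : E2} {s : ℝ} (h : AnalyticAt ℝ u (z + s • v)) (n : ℕ) :
    HasDerivAt (fun s : ℝ => dirD u v n (z + s • v)) (dirD u v (n + 1) (z + s • v)) s := by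
  have h1 := (dirD_analyticAt v h n).differentiableAt.hasFDerivAt
  have h2 : HasDerivAt (fun s : ℝ => z + s • v) v s := by
    simpa using ((hasDerivAt_id s).smul_const v).const_add z
  exact h1.comp_hasDerivAt s h2

lemma lagrange_pos (k : ℕ) : ∀ (G : ℕ → ℝ → ℝ) (s : ℝ), 0 < s →
    (∀ j, ∀ t ∈ Icc 0 s, HasDerivAt (G j) (G (j + 1) t) t) → (∀ j < k, G j 0 = 0) →
    ∃ ξ ∈ Icc 0 s, G 0 s * k.factorial = G k ξ * s ^ k := by
  induction k with
  | zero => intro G s hs _ _; exact ⟨s, ⟨hs.le, le_rfl⟩, by simp⟩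
  | succ k ih =>
    intro G s hs hG h0
    obtain ⟨x, hx, hxe⟩ := exists_ratio_hasDerivAt_eq_ratio_slope (G 0) (G 1) hs
      (fun t ht => (hG 0 t ht).continuousAt.continuousWithinAt)
      (fun t ht => hG 0 t (Ioo_subset_Icc_self ht)) (fun t => t ^ (k + 1))
      (fun t => ((k + 1 : ℕ) : ℝ) * t ^ k) (by fun_prop)
      (fun t _ => by simpa using hasDerivAt_pow (k + 1) t)
    obtain ⟨ξ, hξ, he⟩ := ih (fun j => G (j + 1)) x hx.1
      (fun j t ht => hG (j + 1) t ⟨ht.1, ht.2.trans hx.2.le⟩)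
      (fun j hj => h0 (j + 1) (by omega))
    refine ⟨ξ, ⟨hξ.1, hξ.2.trans hx.2.le⟩, ?_⟩
    have hx0 : x ^ k ≠ 0 := (pow_pos hx.1 k).ne'
    have h00 : G 0 0 = 0 := h0 0 (by omega)
    simp only [h00, ne_eq, Nat.add_eq_zero_iff, one_ne_zero, and_false, not_false_eq_true, zero_pow,
      sub_zero, zero_add] at hxe he
    apply mul_right_cancel₀ hx0
    rw [Nat.factorial_succ, Nat.cast_mul]
    linear_combination (-(k.factorial : ℝ)) * hxe + s ^ (k + 1) * he

lemma lagrange_any (k : ℕ) (G : ℕ → ℝ → ℝ) (s : ℝ)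
    (hG : ∀ j, ∀ t, |t| ≤ |s| → HasDerivAt (G j) (G (j + 1) t) t) (h0 : ∀ j < k, G j 0 = 0) :
    ∃ ξ, |ξ| ≤ |s| ∧ |G 0 s| * k.factorial = |G k ξ| * |s| ^ k := by
  rcases lt_trichotomy s 0 with hs | hs | hs
  · obtain ⟨ξ, hξ, he⟩ := lagrange_pos k (fun j t => (-1) ^ j * G j (-t)) (-s) (by linarith)
      (fun j t ht => by
        have h1 := hG j (-t) (by
          rw [abs_neg, abs_of_nonneg ht.1, abs_of_neg hs]; exact ht.2)
        have h2 := (h1.comp t (hasDerivAt_neg t)).const_mul ((-1 : ℝ) ^ j)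
        convert! h2 using 1
        ring)
      (fun j hj => by simp [h0 j hj])
    refine ⟨-ξ, ?_, ?_⟩
    · rw [abs_neg, abs_of_nonneg hξ.1, abs_of_neg hs]; exact hξ.2
    · have := congrArg abs he
      simpa [abs_mul, abs_pow] using this
  · subst hs
    refine ⟨0, le_rfl, ?_⟩
    rcases k with _ | k
    · simp
    · simp [h0 0 (by omega)]
  · obtain ⟨ξ, hξ, he⟩ := lagrange_pos k G s hs
      (fun j t ht => hG j t (by rw [abs_of_nonneg ht.1, abs_of_pos hs]; exact ht.2)) h0
    refine ⟨ξ, ?_, ?_⟩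
    · rw [abs_of_nonneg hξ.1, abs_of_pos hs]; exact hξ.2
    · have := congrArg abs he
      simpa [abs_mul, abs_pow] using this

/-- A linear functional with kernel spanned by `v`. -/
def ellv (v : E2) : E2 →L[ℝ] ℝ :=
  v 0 • (EuclideanSpace.proj (𝕜 := ℝ) (1 : Fin 2) : E2 →L[ℝ] ℝ) -
    v 1 • (EuclideanSpace.proj (𝕜 := ℝ) (0 : Fin 2) : E2 →L[ℝ] ℝ)

lemma ellv_ker {v z : E2} (hv : v ≠ 0) (h : ellv v z = 0) : ∃ c : ℝ, z = c • v := by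
  have h' : v 0 * z 1 - v 1 * z 0 = 0 := by simpa [ellv] using h
  by_cases h0 : v 0 = 0
  · have h1 : v 1 ≠ 0 := by
      intro h1; apply hv; ext i; fin_cases i <;> simp [h0, h1]
    refine ⟨z 1 / v 1, ?_⟩
    ext i
    fin_cases i
    · have : z 0 = 0 := by
        have : v 1 * z 0 = 0 := by rw [h0] at h'; linarith
        exact (mul_eq_zero.1 this).resolve_left h1
      simp [h0, this]
    · simp; field_simp
  · refine ⟨z 0 / v 0, ?_⟩
    ext i
    fin_cases i
    · simp; field_simp
    · simp; field_simp; linarith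

lemma implicit_curve {F : E2 → ℝ} {p v : E2} (hF : AnalyticAt ℝ F p)
    (hv : fderiv ℝ F p v ≠ 0) (hp : F p = 0) :
    ∃ ψ : ℝ → E2, AnalyticAt ℝ ψ (ellv v p) ∧ ψ (ellv v p) = p ∧
      (∀ᶠ x in 𝓝 (ellv v p), ellv v (ψ x) = x ∧ F (ψ x) = 0) ∧
      (∀ᶠ q in 𝓝 p, F q = 0 → ψ (ellv v q) = q) := by
  have hv0 : v ≠ 0 := by rintro rfl; simp at hv
  let Φ : E2 → ℝ × ℝ := fun z => (ellv v z, F z)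
  let D : E2 →L[ℝ] ℝ × ℝ := (ellv v).prod (fderiv ℝ F p)
  have hDinj : Function.Injective D := by
    rw [injective_iff_map_eq_zero]
    intro z hz
    have hz1 : ellv v z = 0 := congrArg Prod.fst hz
    have hz2 : fderiv ℝ F p z = 0 := congrArg Prod.snd hz
    obtain ⟨c, rfl⟩ := ellv_ker hv0 hz1
    rw [map_smul, smul_eq_mul] at hz2
    rw [(mul_eq_zero.1 hz2).resolve_right hv, zero_smul]
  have hfr : Module.finrank ℝ E2 = Module.finrank ℝ (ℝ × ℝ) := by simp
  let i0 : E2 ≃ₗ[ℝ] ℝ × ℝ := LinearEquiv.ofInjectiveOfFinrankEq D.toLinearMap hDinj hfr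
  let i : E2 ≃L[ℝ] ℝ × ℝ := i0.toContinuousLinearEquiv
  have hi : (i : E2 →L[ℝ] ℝ × ℝ) = D := by ext z <;> rfl
  have hΦan : AnalyticAt ℝ Φ p := ((ellv v).analyticAt p).prod hF
  have hstr : HasStrictFDerivAt Φ (i : E2 →L[ℝ] ℝ × ℝ) p := by
    rw [hi]
    exact (ellv v).hasStrictFDerivAt.prodMk hF.hasStrictFDerivAt
  let e := hstr.toOpenPartialHomeomorph Φ
  have hsrc : p ∈ e.source := hstr.mem_toOpenPartialHomeomorph_source
  have hinv : AnalyticAt ℝ e.symm (Φ p) :=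
    e.analyticAt_symm' hsrc hΦan hstr.hasFDerivAt.fderiv
  have hΦp : Φ p = (ellv v p, 0) := by simp [Φ, hp]
  have hcurve : AnalyticAt ℝ (fun x : ℝ => (x, (0 : ℝ))) (ellv v p) :=
    analyticAt_id.prod analyticAt_const
  refine ⟨fun x => e.symm (x, 0), ?_, ?_, ?_, ?_⟩
  · rw [hΦp] at hinv
    exact hinv.comp_of_eq hcurve rfl
  · show e.symm (ellv v p, 0) = p
    rw [← hΦp]; exact e.left_inv hsrc
  · have h1 : ∀ᶠ y in 𝓝 (Φ p), y ∈ e.target := e.open_target.mem_nhds (e.map_source hsrc)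
    rw [hΦp] at h1
    have h2 : ∀ᶠ x in 𝓝 (ellv v p), (x, (0 : ℝ)) ∈ e.target := hcurve.continuousAt.eventually h1
    filter_upwards [h2] with x hx
    have h3 : Φ (e.symm (x, 0)) = (x, 0) := e.right_inv hx
    exact ⟨congrArg Prod.fst h3, congrArg Prod.snd h3⟩
  · filter_upwards [e.open_source.mem_nhds hsrc] with q hq hFq
    have : Φ q = (ellv v q, 0) := by simp [Φ, hFq]
    rw [← this]
    exact e.left_inv hq


lemma good_of_noncritical {u : E2 → ℝ} {p : E2} (hu : AnalyticAt ℝ u p) (h : fderiv ℝ u p ≠ 0) :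
    GoodPt u p := by
  have hpos : 0 < ‖fderiv ℝ u p‖ := norm_pos_iff.2 h
  refine ⟨‖fderiv ℝ u p‖ / 2, by positivity, 1 / 2, by norm_num, by norm_num, ?_⟩
  have h1 : ∀ᶠ z in 𝓝 p, ‖fderiv ℝ u p‖ / 2 < ‖fderiv ℝ u z‖ :=
    hu.fderiv.continuousAt.norm.eventually (lt_mem_nhds (by linarith))
  have h2 : ∀ᶠ z in 𝓝 p, |u z - u p| < 1 := by
    have : ContinuousAt (fun z => |u z - u p|) p := (hu.continuousAt.sub continuousAt_const).abs
    exact this.eventually (gt_mem_nhds (by simp))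
  filter_upwards [h1, h2] with z hz1 hz2
  rw [norm_gradient_eq]
  have : |u z - u p| ^ (1 / 2 : ℝ) ≤ 1 :=
    Real.rpow_le_one (abs_nonneg _) hz2.le (by norm_num)
  nlinarith

lemma kl_arith {k : ℕ} {a s M c0 N L : ℝ} (hM : 0 < M) (hc0 : 0 < c0) (hN : 0 < N)
    (ha0 : 0 ≤ a) (hs0 : 0 ≤ s)
    (ha : a ≤ M * s ^ (k + 1)) (hL : c0 * s ^ k ≤ N * L) :
    c0 / (N * M ^ ((k : ℝ) / (k + 1))) * a ^ ((k : ℝ) / (k + 1)) ≤ L := by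
  have hθ : 0 ≤ (k : ℝ) / (k + 1) := by positivity
  have h1 : a ^ ((k : ℝ) / (k + 1)) ≤ M ^ ((k : ℝ) / (k + 1)) * s ^ k := by
    refine (Real.rpow_le_rpow ha0 ha hθ).trans ?_
    rw [Real.mul_rpow hM.le (by positivity)]
    have : (s ^ (k + 1)) ^ ((k : ℝ) / (k + 1)) = s ^ k := by
      rw [← Real.rpow_natCast, ← Real.rpow_natCast, ← Real.rpow_mul hs0]
      congr 1
      push_cast
      field_simp
    rw [this]
  have hMp : 0 < M ^ ((k : ℝ) / (k + 1)) := Real.rpow_pos_of_pos hM _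
  rw [div_mul_eq_mul_div, div_le_iff₀ (by positivity)]
  calc c0 * a ^ ((k : ℝ) / (k + 1)) ≤ c0 * (M ^ ((k : ℝ) / (k + 1)) * s ^ k) := by gcongr
    _ = M ^ ((k : ℝ) / (k + 1)) * (c0 * s ^ k) := by ring
    _ ≤ M ^ ((k : ℝ) / (k + 1)) * (N * L) := by gcongr
    _ = _ := by ring

lemma good_of_curve {u : E2 → ℝ} {p v : E2} {k : ℕ} (hk : 1 ≤ k) (hu : AnalyticAt ℝ u p)
    (hne : dirD u v (k + 1) p ≠ 0) {ψ : ℝ → E2} (hψc : ContinuousAt ψ (ellv v p))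
    (hψp : ψ (ellv v p) = p)
    (hψ : ∀ᶠ x in 𝓝 (ellv v p), ellv v (ψ x) = x ∧ u (ψ x) = u p ∧
      ∀ j, 1 ≤ j → j ≤ k → dirD u v j (ψ x) = 0) : GoodPt u p := by
  have hv0 : v ≠ 0 := by rintro rfl; simp [dirD] at hne
  set c0 := |dirD u v (k + 1) p| / 2 with hc0
  have hpos : 0 < |dirD u v (k + 1) p| := abs_pos.2 hne
  set M := |dirD u v (k + 1) p| + 1 with hM
  have hca : ContinuousAt (fun z => |dirD u v (k + 1) z|) p :=
    (dirD_analyticAt v hu (k + 1)).continuousAt.abs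
  have hnb : ∀ᶠ z in 𝓝 p, AnalyticAt ℝ u z ∧ c0 < |dirD u v (k + 1) z| ∧
      |dirD u v (k + 1) z| < M :=
    hu.eventually_analyticAt.and ((hca.eventually (lt_mem_nhds (by rw [hc0]; linarith))).and
      (hca.eventually (gt_mem_nhds (by rw [hM]; linarith))))
  obtain ⟨R, hR, hball⟩ := Metric.eventually_nhds_iff.1 hnb
  have hle : ContinuousAt (fun q => ellv v q) p := (ellv v).continuous.continuousAt
  have hcomp : ContinuousAt (fun q => ψ (ellv v q)) p := ContinuousAt.comp hψc hle
  have e1 : ∀ᶠ q in 𝓝 p, dist (ψ (ellv v q)) p < R / 4 := by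
    have := hcomp.eventually (Metric.ball_mem_nhds (ψ (ellv v p)) (show 0 < R / 4 by linarith))
    simpa [hψp] using this
  have e2 : ∀ᶠ q in 𝓝 p, dist q p < R / 4 := Metric.ball_mem_nhds p (by linarith)
  have e3 := hle.eventually hψ
  have hkpos : (0 : ℝ) < k := by exact_mod_cast hk
  refine ⟨c0 / ((k.factorial * ‖v‖) * M ^ ((k : ℝ) / (k + 1))), by positivity,
    (k : ℝ) / (k + 1), by positivity, by rw [div_lt_one (by positivity)]; linarith, ?_⟩
  filter_upwards [e1, e2, e3] with q h1 h2 h3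
  obtain ⟨h3a, h3b, h3c⟩ := h3
  set q' := ψ (ellv v q) with hq'
  obtain ⟨s, hs⟩ := ellv_ker (z := q - q') hv0 (by rw [map_sub, h3a, sub_self])
  have hqs : q = q' + s • v := by rw [← hs]; abel
  have hline : ∀ t, |t| ≤ |s| → dist (q' + t • v) p < R := by
    intro t ht
    have : ‖t • v‖ ≤ ‖q - q'‖ := by
      rw [hs, norm_smul, norm_smul, Real.norm_eq_abs, Real.norm_eq_abs]; gcongr
    have h4 : ‖q - q'‖ ≤ dist q p + dist q' p := by
      rw [← dist_eq_norm]; exact dist_triangle_right _ _ _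
    have h5 : dist (q' + t • v) p ≤ ‖t • v‖ + dist q' p := by
      rw [dist_eq_norm, dist_eq_norm, add_comm q', add_sub_assoc]; exact norm_add_le _ _
    linarith
  rw [norm_gradient_eq]
  obtain ⟨ξ, hξ, hξe⟩ := lagrange_any (k + 1)
    (fun j t => dirD u v j (q' + t • v) - if j = 0 then u p else 0) s
    (fun j t ht => by
      have := (dirD_line (hball (hline t ht)).1 j).sub_const (if j = 0 then u p else 0)
      simpa using this)
    (fun j hj => by
      rcases Nat.eq_zero_or_pos j with rfl | hj0
      · simp [dirD, h3b]
      · simp [h3c j hj0 (by omega), hj0.ne'])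
  obtain ⟨ξ', hξ', hξe'⟩ := lagrange_any k
    (fun j t => dirD u v (j + 1) (q' + t • v)) s
    (fun j t ht => dirD_line (hball (hline t ht)).1 (j + 1))
    (fun j hj => by simp [h3c (j + 1) (by omega) (by omega)])
  have b1 := (hball (hline ξ hξ)).2.2
  have b2 := (hball (hline ξ' hξ')).2.1
  simp only [← hqs] at hξe hξe'
  refine kl_arith (s := |s|) (by positivity) (by positivity) (by positivity) (abs_nonneg _)
    (abs_nonneg _) ?_ ?_
  · have hf : (1 : ℝ) ≤ ((k + 1).factorial : ℝ) := by exact_mod_cast Nat.one_le_iff_ne_zero.2 (Nat.factorial_ne_zero _)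
    simp only [dirD, if_true] at hξe
    calc |u q - u p| ≤ |u q - u p| * ((k + 1).factorial : ℝ) := le_mul_of_one_le_right (abs_nonneg _) hf
      _ ≤ M * |s| ^ (k + 1) := by
        rw [hξe]
        gcongr
        simpa [dirD] using b1.le
  · have hL : |dirD u v 1 q| ≤ ‖fderiv ℝ u q‖ * ‖v‖ := (fderiv ℝ u q).le_opNorm v
    calc c0 * |s| ^ k ≤ |dirD u v (k + 1) (q' + ξ' • v)| * |s| ^ k := by gcongr
      _ = |dirD u v 1 q| * k.factorial := hξe'.symm
      _ ≤ (‖fderiv ℝ u q‖ * ‖v‖) * k.factorial := by gcongr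
      _ = _ := by ring

lemma good_of_accumulated {u : E2 → ℝ} {p v : E2} {k : ℕ} (hk : 1 ≤ k) (hu : AnalyticAt ℝ u p)
    (hne : dirD u v (k + 1) p ≠ 0) (hp0 : dirD u v k p = 0)
    (hfr : ∃ᶠ q in 𝓝[≠] p, fderiv ℝ u q = 0 ∧ ∀ j, 1 ≤ j → j ≤ k → dirD u v j q = 0) :
    GoodPt u p := by
  obtain ⟨ψ, hψa, hψp, hψ, hψl⟩ := implicit_curve (dirD_analyticAt v hu k) hne hp0
  have hle : ContinuousAt (fun q => ellv v q) p := (ellv v).continuous.continuousAt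
  have hfreq : ∃ᶠ x in 𝓝[≠] (ellv v p), fderiv ℝ u (ψ x) = 0 ∧
      ∀ j, 1 ≤ j → j ≤ k → dirD u v j (ψ x) = 0 := by
    intro hcon
    rw [eventually_nhdsWithin_iff] at hcon
    have h1 := hle.eventually hcon
    apply hfr
    rw [eventually_nhdsWithin_iff]
    filter_upwards [h1, hψl] with q hq1 hq2 hqp hS
    have hq3 := hq2 (hS.2 k hk le_rfl)
    have hne' : ellv v q ≠ ellv v p := by
      intro h; apply hqp; rw [← hq3, h, hψp]; rfl
    exact hq1 hne' (by rw [hq3]; exact hS)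
  have hD : AnalyticAt ℝ (fun x => fderiv ℝ u (ψ x)) (ellv v p) :=
    AnalyticAt.comp_of_eq (g := fderiv ℝ u) hu.fderiv hψa hψp
  have hDz := hD.frequently_zero_iff_eventually_zero.1 (hfreq.mono fun x hx => hx.1)
  have hjz : ∀ j ∈ Finset.Icc 1 k, ∀ᶠ x in 𝓝 (ellv v p), dirD u v j (ψ x) = 0 := by
    intro j hj
    rw [Finset.mem_Icc] at hj
    have hA : AnalyticAt ℝ (fun x => dirD u v j (ψ x)) (ellv v p) :=
      AnalyticAt.comp_of_eq (g := dirD u v j) (dirD_analyticAt v hu j) hψa hψp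
    exact hA.frequently_zero_iff_eventually_zero.1 (hfreq.mono fun x hx => hx.2 j hj.1 hj.2)
  have hjz' := (Filter.eventually_all_finset _).2 hjz
  have huan : ∀ᶠ x in 𝓝 (ellv v p), AnalyticAt ℝ u (ψ x) := by
    have := hu.eventually_analyticAt
    rw [← hψp] at this
    exact hψa.continuousAt.eventually this
  have hconst : ∀ᶠ x in 𝓝 (ellv v p), u (ψ x) = u p := by
    obtain ⟨r, hr, hb⟩ := Metric.eventually_nhds_iff.1
      (hDz.and (huan.and hψa.eventually_analyticAt))
    filter_upwards [Metric.ball_mem_nhds (ellv v p) hr] with x hx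
    have := (convex_ball (ellv v p) r).norm_image_sub_le_of_norm_hasDerivWithin_le
      (f := fun x => u (ψ x)) (f' := fun _ => 0) (C := 0)
      (fun y hy => by
        have h := hb hy
        have h1 := h.2.1.differentiableAt.hasFDerivAt.comp_hasDerivAt y
          h.2.2.differentiableAt.hasDerivAt
        rw [h.1] at h1
        exact h1.hasDerivWithinAt)
      (fun y hy => by simp) (Metric.mem_ball_self hr) hx
    rw [zero_mul, norm_le_zero_iff, sub_eq_zero, hψp] at this
    exact this
  refine good_of_curve hk hu hne hψa.continuousAt hψp ?_
  filter_upwards [hψ, hconst, hjz'] with x h1 h2 h3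
  exact ⟨h1.1, h2, fun j hj1 hj2 => h3 j (Finset.mem_Icc.2 ⟨hj1, hj2⟩)⟩

lemma exists_dir {u : E2 → ℝ} {z : E2} (hu : AnalyticAt ℝ u z)
    (hnc : ¬ ∀ᶠ w in 𝓝 z, u w = u z) : ∃ v : E2, ∃ m, 1 ≤ m ∧ dirD u v m z ≠ 0 := by
  obtain ⟨r, hr, hb⟩ := Metric.eventually_nhds_iff.1 hu.eventually_analyticAt
  have : ∃ w, dist w z < r ∧ u w ≠ u z := by
    by_contra! hcon
    exact hnc (Metric.eventually_nhds_iff.2 ⟨r, hr, fun w hw => hcon w hw⟩)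
  obtain ⟨w, hw, hwne⟩ := this
  refine ⟨w - z, ?_⟩
  by_contra! hcon
  set v := w - z
  have hseg : ∀ t ∈ Icc (0:ℝ) 1, AnalyticAt ℝ u (z + t • v) := by
    intro t ht
    apply hb
    rw [dist_eq_norm, add_sub_cancel_left, norm_smul, Real.norm_eq_abs, abs_of_nonneg ht.1]
    rw [dist_eq_norm] at hw
    calc t * ‖v‖ ≤ 1 * ‖v‖ := by gcongr; exact ht.2
      _ < r := by simpa using hw
  have hlin : ∀ t : ℝ, AnalyticAt ℝ (fun t : ℝ => z + t • v) t := fun t =>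
    analyticAt_const.add (analyticAt_id.smul analyticAt_const)
  let g : ℝ → ℝ := fun t => u (z + t • v) - u z
  have hg : AnalyticOnNhd ℝ g (Icc 0 1) := fun t ht =>
    (AnalyticAt.comp_of_eq (g := u) (f := fun t : ℝ => z + t • v) (hseg t ht) (hlin t) rfl).sub
      analyticAt_const
  have h01 : (0:ℝ) ∈ Icc (0:ℝ) 1 := by simp
  have hit : ∀ n, ∀ᶠ t in 𝓝 (0:ℝ), iteratedDeriv n g t =
      dirD u v n (z + t • v) - if n = 0 then u z else 0 := by
    have hev : ∀ᶠ t in 𝓝 (0:ℝ), AnalyticAt ℝ u (z + t • v) := by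
      have h1 : ContinuousAt (fun t : ℝ => z + t • v) 0 := (hlin 0).continuousAt
      exact h1.eventually (by simpa using hu.eventually_analyticAt)
    intro n
    induction n with
    | zero => simp [dirD, g]
    | succ n ih =>
      filter_upwards [ih.eventually_nhds, hev] with t ht hta
      rw [iteratedDeriv_succ]
      have h2 : iteratedDeriv n g =ᶠ[𝓝 t] fun t => dirD u v n (z + t • v) - if n = 0 then u z else 0 := ht
      rw [h2.deriv_eq]
      have := (dirD_line hta n).sub_const (if n = 0 then u z else 0)
      rw [this.deriv]
      simp
  have hz : ∀ n, iteratedDeriv n g 0 = 0 := by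
    intro n
    rw [(hit n).self_of_nhds]
    rcases Nat.eq_zero_or_pos n with rfl | hn
    · simp [dirD]
    · simp [hcon n hn, hn.ne']
  have htop : analyticOrderAt g 0 = ⊤ := by
    rw [ENat.eq_top_iff_forall_ge]
    intro n
    exact (natCast_le_analyticOrderAt_iff_iteratedDeriv_eq_zero (hg 0 h01)).2 fun i _ => hz i
  rw [analyticOrderAt_eq_top] at htop
  have := hg.eqOn_zero_of_preconnected_of_eventuallyEq_zero isPreconnected_Icc h01 htop
    (show (1:ℝ) ∈ Icc (0:ℝ) 1 by simp)
  apply hwne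
  simpa [g, v, sub_eq_zero] using this

lemma countable_bad {u : E2 → ℝ} {z : E2} (hu : AnalyticAt ℝ u z) :
    ∃ r > 0, {p | p ∈ ball z r ∧ ¬ GoodPt u p}.Countable := by
  by_cases hnc : ∀ᶠ w in 𝓝 z, u w = u z
  · obtain ⟨r, hr, hb⟩ := Metric.eventually_nhds_iff.1 hnc
    refine ⟨r, hr, ?_⟩
    convert Set.countable_empty
    ext p
    simp only [mem_ofPred_eq, mem_empty_iff_false, iff_false, not_and, not_not]
    intro hp
    refine ⟨1, one_pos, 1 / 2, by norm_num, by norm_num, ?_⟩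
    filter_upwards [isOpen_ball.mem_nhds hp] with q hq
    rw [hb hq, hb hp]
    simp
  · obtain ⟨v, m, hm, hne⟩ := exists_dir hu hnc
    obtain ⟨r, hr, hb⟩ := Metric.eventually_nhds_iff.1 (hu.eventually_analyticAt.and
      ((dirD_analyticAt v hu m).continuousAt.eventually_ne hne))
    refine ⟨r, hr, ?_⟩
    let S : ℕ → Set E2 := fun k => {p | p ∈ ball z r ∧ ¬ GoodPt u p ∧ 1 ≤ k ∧ fderiv ℝ u p = 0 ∧
      (∀ j, 1 ≤ j → j ≤ k → dirD u v j p = 0) ∧ dirD u v (k + 1) p ≠ 0}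
    have hS : ∀ k, (S k).Countable := by
      intro k
      have hd : DiscreteTopology (S k) := by
        rw [discreteTopology_subtype_iff]
        intro p hp
        obtain ⟨hp1, hp2, hp3, hp4, hp5, hp6⟩ := hp
        by_contra hbot
        apply hp2
        refine good_of_accumulated hp3 (hb hp1).1 hp6 (hp5 k hp3 le_rfl) ?_
        have : ∃ᶠ q in 𝓝[≠] p, q ∈ S k := by
          rw [Filter.frequently_mem_iff_neBot]; exact ⟨hbot⟩
        exact this.mono fun q hq => ⟨hq.2.2.2.1, hq.2.2.2.2.1⟩
      exact Set.countable_coe_iff.1 (countable_of_Lindelof_of_discrete)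
    refine (Set.countable_iUnion hS).mono ?_
    rintro p ⟨hp, hbad⟩
    have hcrit : fderiv ℝ u p = 0 := by
      by_contra h
      exact hbad (good_of_noncritical (hb hp).1 h)
    classical
    have hex : ∃ n, 1 ≤ n ∧ dirD u v n p ≠ 0 := ⟨m, hm, (hb hp).2⟩
    have hsp := Nat.find_spec hex
    have h2 : 2 ≤ Nat.find hex := by
      by_contra hlt
      have h1 : Nat.find hex = 1 := by omega
      rw [h1] at hsp
      exact hsp.2 (by simp [dirD, hcrit])
    refine mem_iUnion.2 ⟨Nat.find hex - 1, hp, hbad, by omega, hcrit, ?_, ?_⟩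
    · intro j hj1 hj2
      by_contra hj
      have := Nat.find_min' hex ⟨hj1, hj⟩
      omega
    · rw [Nat.sub_add_cancel (by omega)]; exact hsp.2


/-- `γ` is a gradient-descent trajectory on `[a, b]`. -/
def Traj (u : E2 → ℝ) (γ : ℝ → E2) (a b : ℝ) : Prop :=
  ∀ t ∈ Icc a b, HasDerivWithinAt γ (-(gradient u (γ t))) (Icc a b) t

lemma Traj.mono {u : E2 → ℝ} {γ : ℝ → E2} {a b a' b' : ℝ} (h : Traj u γ a b) (ha : a ≤ a')
    (hb : b' ≤ b) : Traj u γ a' b' := fun t ht =>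
  (h t ⟨ha.trans ht.1, ht.2.trans hb⟩).mono (Icc_subset_Icc ha hb)

lemma Traj.continuousOn {u : E2 → ℝ} {γ : ℝ → E2} {a b : ℝ} (h : Traj u γ a b) :
    ContinuousOn γ (Icc a b) := fun t ht => (h t ht).continuousWithinAt

lemma Traj.contDist {u : E2 → ℝ} {γ : ℝ → E2} {a b : ℝ} (h : Traj u γ a b) (q : E2) :
    ContinuousOn (fun t => dist (γ t) q) (Icc a b) :=
  fun t ht => Filter.Tendsto.dist (Traj.continuousOn h t ht) tendsto_const_nhds

lemma Traj.shift {u : E2 → ℝ} {γ : ℝ → E2} {a b : ℝ} (h : Traj u γ a b) (d : ℝ) :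
    Traj u (fun t => γ (t + d)) (a - d) (b - d) := by
  intro t ht
  have h1 := h (t + d) ⟨by linarith [ht.1], by linarith [ht.2]⟩
  have h2 : HasDerivWithinAt (fun t : ℝ => t + d) 1 (Icc (a - d) (b - d)) t :=
    ((hasDerivAt_id t).add_const d).hasDerivWithinAt
  have h3 := HasDerivWithinAt.scomp t h1 h2
    (fun s hs => (⟨by linarith [hs.1], by linarith [hs.2]⟩ : s + d ∈ Icc a b))
  rw [one_smul] at h3
  exact h3

lemma first_time {f : ℝ → ℝ} {a b d : ℝ} (hab : a ≤ b) (hf : ContinuousOn f (Icc a b))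
    (ha : f a < d) (hb : d ≤ f b) :
    ∃ t ∈ Icc a b, a < t ∧ f t = d ∧ ∀ s ∈ Ico a t, f s < d := by
  let S := Icc a b ∩ f ⁻¹' Ici d
  have hSc : IsCompact S := by
    have : IsClosed S := hf.preimage_isClosed_of_isClosed isClosed_Icc isClosed_Ici
    exact isCompact_Icc.of_isClosed_subset this inter_subset_left
  obtain ⟨t, ht⟩ := hSc.exists_isLeast ⟨b, ⟨hab, le_rfl⟩, hb⟩
  have htI : t ∈ Icc a b := ht.1.1
  have htd : d ≤ f t := ht.1.2
  have hlt : ∀ s ∈ Ico a t, f s < d := by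
    intro s hs
    by_contra hcon
    have := ht.2 (⟨⟨hs.1, hs.2.le.trans htI.2⟩, not_lt.1 hcon⟩ : s ∈ S)
    exact absurd hs.2 (not_lt.2 this)
  have hat : a < t := by
    rcases htI.1.lt_or_eq with h | h
    · exact h
    · rw [← h] at htd; linarith
  refine ⟨t, htI, hat, le_antisymm ?_ htd, hlt⟩
  obtain ⟨s, hs, hse⟩ := intermediate_value_Icc htI.1 (hf.mono (Icc_subset_Icc_right htI.2))
    ⟨ha.le, htd⟩
  rcases hs.2.lt_or_eq with h | h
  · exact absurd hse (hlt s ⟨hs.1, h⟩).ne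
  · rw [← h, hse]

lemma last_time {f : ℝ → ℝ} {a b d : ℝ} (hab : a ≤ b) (hf : ContinuousOn f (Icc a b))
    (ha : d ≤ f a) (hb : f b < d) :
    ∃ t ∈ Icc a b, f t = d ∧ ∀ s ∈ Icc t b, f s ≤ d := by
  obtain ⟨t, ht, -, hte, hlt⟩ := first_time (f := fun s => f (-s)) (neg_le_neg hab)
    (hf.comp continuous_neg.continuousOn (fun s hs => ⟨by linarith [hs.2], by linarith [hs.1]⟩))
    (by simpa using hb) (by simpa using ha)
  refine ⟨-t, ⟨by linarith [ht.2], by linarith [ht.1]⟩, hte, ?_⟩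
  intro s hs
  rcases hs.1.lt_or_eq with h | h
  · have := hlt (-s) ⟨by linarith [hs.2], by linarith⟩
    simp only [neg_neg] at this
    exact this.le
  · rw [← h]; exact hte.le

lemma local_back {u : E2 → ℝ} {α β : ℝ → E2} {a b : ℝ} (hab : a < b)
    (hu : AnalyticAt ℝ u (α b)) (hα : Traj u α a b) (hβ : Traj u β a b) (he : α b = β b) :
    ∃ l ∈ Ico a b, α l = β l := by
  have hC : ContDiffAt ℝ 1 (fun z => -(gradient u z)) (α b) := by
    have h1 : ContDiffAt ℝ 1 (fderiv ℝ u) (α b) := hu.fderiv.contDiffAt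
    have h2 := ((InnerProductSpace.toDual ℝ E2).symm.contDiff (n := 1)).contDiffAt.comp (α b) h1
    exact h2.neg
  obtain ⟨K, s, hs, hL⟩ := hC.exists_lipschitzOnWith
  have hb : b ∈ Icc a b := ⟨hab.le, le_rfl⟩
  have e1 : ∀ᶠ t in 𝓝[≤] b, α t ∈ s := by
    rw [← nhdsWithin_Icc_eq_nhdsLE hab]
    exact (hα b hb).continuousWithinAt.eventually hs
  have e2 : ∀ᶠ t in 𝓝[≤] b, β t ∈ s := by
    rw [← nhdsWithin_Icc_eq_nhdsLE hab]
    rw [he] at hs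
    exact (hβ b hb).continuousWithinAt.eventually hs
  obtain ⟨l, hl, hsub⟩ := (mem_nhdsLE_iff_exists_mem_Ico_Ioc_subset hab).1 (e1.and e2)
  refine ⟨l, hl, ?_⟩
  have := ODE_solution_unique_of_mem_Icc_left (v := fun _ z => -(gradient u z)) (s := fun _ => s)
    (K := K) (a := l) (b := b) (f := α) (g := β) (fun _ _ => hL)
    (hα.mono hl.1 le_rfl).continuousOn
    (fun t ht => (hα t ⟨hl.1.trans ht.1.le, ht.2⟩).mono_of_mem_nhdsWithin
      (Icc_mem_nhdsLE_of_mem ⟨hl.1.trans_lt ht.1, ht.2⟩))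
    (fun t ht => (hsub ht).1)
    (hβ.mono hl.1 le_rfl).continuousOn
    (fun t ht => (hβ t ⟨hl.1.trans ht.1.le, ht.2⟩).mono_of_mem_nhdsWithin
      (Icc_mem_nhdsLE_of_mem ⟨hl.1.trans_lt ht.1, ht.2⟩))
    (fun t ht => (hsub ht).2) he
  exact this ⟨le_rfl, hl.2.le⟩

lemma Traj.deriv_comp {u : E2 → ℝ} {γ : ℝ → E2} {a b t : ℝ} (h : Traj u γ a b)
    (ht : t ∈ Icc a b) (hd : DifferentiableAt ℝ u (γ t)) :
    HasDerivWithinAt (fun t => u (γ t)) (-‖gradient u (γ t)‖ ^ 2) (Icc a b) t := by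
  have h1 := hd.hasFDerivAt.comp_hasDerivWithinAt t (h t ht)
  convert! h1 using 1
  rw [map_neg, ← inner_gradient_left, real_inner_self_eq_norm_sq]

lemma Traj.antitone {u : E2 → ℝ} {γ : ℝ → E2} {a b : ℝ} (h : Traj u γ a b)
    (hd : ∀ t ∈ Icc a b, DifferentiableAt ℝ u (γ t)) : AntitoneOn (fun t => u (γ t)) (Icc a b) := by
  refine antitoneOn_of_hasDerivWithinAt_nonpos (convex_Icc a b)
    (f' := fun t => -‖gradient u (γ t)‖ ^ 2)
    (fun t ht => (h.deriv_comp ht (hd t ht)).continuousWithinAt)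
    (fun t ht => ((h.deriv_comp (interior_subset ht) (hd t (interior_subset ht))).mono
      interior_subset)) (fun t _ => ?_)
  have := sq_nonneg ‖gradient u (γ t)‖
  linarith

lemma length_bound {u : E2 → ℝ} {γ : ℝ → E2} {a b κ c θ : ℝ} (hc : 0 < c) (hθ0 : 0 < θ)
    (hθ1 : θ < 1) (hab : a ≤ b) (h : Traj u γ a b)
    (hd : ∀ t ∈ Icc a b, DifferentiableAt ℝ u (γ t)) (hge : ∀ t ∈ Icc a b, κ ≤ u (γ t))
    (hkl : ∀ t ∈ Ico a b, c * |u (γ t) - κ| ^ θ ≤ ‖gradient u (γ t)‖) :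
    dist (γ b) (γ a) ≤ (u (γ a) - κ) ^ (1 - θ) / (c * (1 - θ)) := by
  have hθ' : 0 < 1 - θ := by linarith
  have hanti := h.antitone hd
  let H : ℝ → ℝ := fun t => u (γ t) - κ
  have hH0 : ∀ t ∈ Icc a b, 0 ≤ H t := fun t ht => sub_nonneg.2 (hge t ht)
  have hHd : ∀ t ∈ Icc a b, HasDerivWithinAt H (-‖gradient u (γ t)‖ ^ 2) (Icc a b) t :=
    fun t ht => (h.deriv_comp ht (hd t ht)).sub_const κ
  let B : ℝ → ℝ := fun t => ((H a) ^ (1 - θ) - (H t) ^ (1 - θ)) / (c * (1 - θ))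
  let B' : ℝ → ℝ := fun t => if H t = 0 then 0 else ‖gradient u (γ t)‖ ^ 2 * (H t) ^ (-θ) / c
  have hcrit : ∀ t ∈ Ico a b, H t = 0 → (∀ᶠ s in 𝓝[≥] t, H s = 0) ∧ ‖gradient u (γ t)‖ = 0 := by
    intro t ht h0
    have hev : ∀ᶠ s in 𝓝[≥] t, H s = 0 := by
      filter_upwards [Icc_mem_nhdsGE ht.2] with s hs
      have hsI : s ∈ Icc a b := ⟨ht.1.trans hs.1, hs.2⟩
      refine le_antisymm ?_ (hH0 s hsI)
      have := hanti ⟨ht.1, ht.2.le⟩ hsI hs.1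
      simp only [H] at h0 ⊢
      linarith
    refine ⟨hev, ?_⟩
    have h1 : HasDerivWithinAt H (-‖gradient u (γ t)‖ ^ 2) (Ici t) t :=
      (hHd t ⟨ht.1, ht.2.le⟩).mono_of_mem_nhdsWithin (Icc_mem_nhdsGE_of_mem ht)
    have h2 : HasDerivWithinAt H 0 (Ici t) t :=
      (hasDerivWithinAt_const t (Ici t) (0:ℝ)).congr_of_eventuallyEq hev h0
    have h3 := (uniqueDiffOn_Ici t t self_mem_Ici).eq_deriv _ h1 h2
    have : ‖gradient u (γ t)‖ ^ 2 = 0 := by linarith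
    exact pow_eq_zero_iff (two_ne_zero) |>.1 this
  have hB : ContinuousOn B (Icc a b) := by
    intro t ht
    have h1 : ContinuousWithinAt (fun t => (H t) ^ (1 - θ)) (Icc a b) t :=
      (hHd t ht).continuousWithinAt.rpow_const (Or.inr hθ'.le)
    exact (continuousWithinAt_const.sub h1).div_const _
  have key := image_norm_le_of_norm_deriv_right_le_deriv_boundary' (a := a) (b := b)
    (f := fun t => γ t - γ a) (f' := fun t => -(gradient u (γ t))) (B := B) (B' := B')
    (h.continuousOn.sub continuousOn_const)
    (fun t ht => ((h t ⟨ht.1, ht.2.le⟩).mono_of_mem_nhdsWithin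
      (Icc_mem_nhdsGE_of_mem ht)).sub_const _)
    (by simp [B]) hB
    (fun t ht => by
      by_cases h0 : H t = 0
      · have hev := (hcrit t ht h0).1
        simp only [B', h0, if_true]
        refine (hasDerivWithinAt_const t (Ici t) (B t)).congr_of_eventuallyEq ?_ rfl
        filter_upwards [hev] with s hs
        simp only [B, hs, h0]
      · simp only [B', h0, if_false]
        have h1 : HasDerivWithinAt H (-‖gradient u (γ t)‖ ^ 2) (Ici t) t :=
          (hHd t ⟨ht.1, ht.2.le⟩).mono_of_mem_nhdsWithin (Icc_mem_nhdsGE_of_mem ht)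
        have h2 := ((h1.rpow_const (p := 1 - θ) (Or.inl h0)).const_sub
          ((H a) ^ (1 - θ))).div_const (c * (1 - θ))
        convert! h2 using 1
        rw [show 1 - θ - 1 = -θ by ring]
        field_simp)
    (fun t ht => by
      rw [norm_neg]
      by_cases h0 : H t = 0
      · simp only [B', h0, if_true]
        exact (hcrit t ht h0).2.le
      · simp only [B', h0, if_false]
        have hpos : 0 < H t := lt_of_le_of_ne (hH0 t ⟨ht.1, ht.2.le⟩) (Ne.symm h0)
        have hk := hkl t ht
        change c * |H t| ^ θ ≤ _ at hk
        rw [abs_of_pos hpos] at hk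
        have hp : 0 < (H t) ^ θ := Real.rpow_pos_of_pos hpos θ
        rw [Real.rpow_neg hpos.le, le_div_iff₀ hc, ← div_eq_mul_inv, le_div_iff₀ hp]
        nlinarith [norm_nonneg (gradient u (γ t))])
    (show b ∈ Icc a b from ⟨hab, le_rfl⟩)
  rw [dist_eq_norm]
  refine key.trans ?_
  simp only [B]
  gcongr
  have : 0 ≤ (H b) ^ (1 - θ) := Real.rpow_nonneg (hH0 b ⟨hab, le_rfl⟩) _
  simp only [H] at this ⊢
  linarith


lemma eventually_small_bound {X : Type*} {l : Filter X} {g : X → ℝ} {κ c θ η : ℝ}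
    (hθ1 : θ < 1) (hη : 0 < η) (hg : Tendsto g l (𝓝 κ)) :
    ∀ᶠ x in l, (g x - κ) ^ (1 - θ) / (c * (1 - θ)) < η := by
  have h1 : Tendsto (fun x => (g x - κ) ^ (1 - θ) / (c * (1 - θ))) l (𝓝 0) := by
    have h2 : Tendsto (fun x => g x - κ) l (𝓝 0) := by
      simpa using hg.sub_const κ
    have h3 := (h2.rpow_const (p := 1 - θ) (Or.inr (by linarith))).div_const (c * (1 - θ))
    rwa [Real.zero_rpow (by linarith), zero_div] at h3
  exact h1.eventually (gt_mem_nhds hη)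

/-- Trajectories cannot travel from near `z₀` to near a good point `q ≠ z₀` above level `u z₀`. -/
lemma no_arrival {u : E2 → ℝ} {z₀ q : E2} (hz : ContinuousAt u z₀) (hq : ContinuousAt u q)
    (hne : q ≠ z₀) (hgood : GoodPt u q) :
    ∀ᶠ w : E2 × E2 in 𝓝 (z₀, q), ¬ ∃ b : ℝ, 0 ≤ b ∧ ∃ γ : ℝ → E2, γ 0 = w.1 ∧ γ b = w.2 ∧
      Traj u γ 0 b ∧ (∀ t ∈ Icc 0 b, DifferentiableAt ℝ u (γ t)) ∧
      (∀ t ∈ Icc 0 b, u z₀ ≤ u (γ t)) := by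
  have t1 : Tendsto (fun w : E2 × E2 => u w.1) (𝓝 (z₀, q)) (𝓝 (u z₀)) :=
    hz.tendsto.comp (continuous_fst.tendsto (z₀, q))
  have t2 : Tendsto (fun w : E2 × E2 => u w.2) (𝓝 (z₀, q)) (𝓝 (u q)) :=
    hq.tendsto.comp (continuous_snd.tendsto (z₀, q))
  rcases lt_trichotomy (u q) (u z₀) with hlt | heq | hgt
  · filter_upwards [t2.eventually (gt_mem_nhds hlt)] with w hw
    rintro ⟨b, hb, γ, h0, h1, hT, hd, hge⟩
    have := hge b ⟨hb, le_rfl⟩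
    rw [h1] at this
    linarith
  · obtain ⟨c, hc, θ, hθ0, hθ1, hev⟩ := hgood
    obtain ⟨r0, hr0, hb0⟩ := Metric.eventually_nhds_iff.1 hev
    have hdpos : 0 < dist z₀ q := dist_pos.2 hne.symm
    set r := min r0 (dist z₀ q) / 2 with hr
    have hmin : 0 < min r0 (dist z₀ q) := lt_min hr0 hdpos
    have hrpos : 0 < r := by positivity
    have hrr0 : r < r0 := by have := min_le_left r0 (dist z₀ q); linarith
    have hrd : r < dist z₀ q := by have := min_le_right r0 (dist z₀ q); linarith
    have e1 : ∀ᶠ w : E2 × E2 in 𝓝 (z₀, q), r < dist w.1 q := by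
      have : ContinuousAt (fun w : E2 × E2 => dist w.1 q) (z₀, q) := by fun_prop
      exact this.eventually (lt_mem_nhds hrd)
    have e2 : ∀ᶠ w : E2 × E2 in 𝓝 (z₀, q), dist w.2 q < r / 2 := by
      have : ContinuousAt (fun w : E2 × E2 => dist w.2 q) (z₀, q) := by fun_prop
      exact this.eventually (gt_mem_nhds (by simpa using hrpos))
    have e3 := eventually_small_bound (c := c) (θ := θ) (η := r / 2) hθ1 (by linarith) t1
    filter_upwards [e1, e2, e3] with w h1 h2 h3
    rintro ⟨b, hb, γ, g0, gb, hT, hd, hge⟩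
    have hcont : ContinuousOn (fun t => dist (γ t) q) (Icc 0 b) :=
      hT.contDist _
    obtain ⟨a, ha, hae, hal⟩ := last_time (d := r) hb hcont (by simp only [g0]; exact h1.le)
      (by simp only [gb]; linarith)
    have hsub : ∀ t ∈ Icc a b, t ∈ Icc 0 b := fun t ht => ⟨ha.1.trans ht.1, ht.2⟩
    have hlen := length_bound (κ := u z₀) hc hθ0 hθ1 ha.2 (hT.mono ha.1 le_rfl)
      (fun t ht => hd t (hsub t ht)) (fun t ht => hge t (hsub t ht))
      (fun t ht => by
        have := hb0 (y := γ t) ((hal t ⟨ht.1, ht.2.le⟩).trans_lt hrr0)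
        rwa [heq] at this)
    have hmono : u (γ a) ≤ u w.1 := by
      have := hT.antitone hd ⟨le_rfl, hb⟩ ha ha.1
      simpa [g0] using this
    have hle : (u (γ a) - u z₀) ^ (1 - θ) / (c * (1 - θ)) ≤
        (u w.1 - u z₀) ^ (1 - θ) / (c * (1 - θ)) := by
      have : 0 < 1 - θ := by linarith
      have h5 := hge a ha
      gcongr
    have htri := dist_triangle_left (γ a) q (γ b)
    rw [gb] at htri hlen
    linarith
  · have e : ∀ᶠ w : E2 × E2 in 𝓝 (z₀, q), u w.1 < u w.2 := t1.eventually_lt t2 hgt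
    filter_upwards [e] with w hw
    rintro ⟨b, hb, γ, h0, h1, hT, hd, hge⟩
    have := hT.antitone hd ⟨le_rfl, hb⟩ ⟨hb, le_rfl⟩ hb
    simp only [h0, h1] at this
    linarith

lemma exists_radius {S : Set E2} (hS : S.Countable) (p : E2) {η : ℝ} (hη : 0 < η) :
    ∃ ρ ∈ Ioo 0 η, ∀ q ∈ sphere p ρ, q ∉ S := by
  by_contra! hcon
  have hsub : Ioo 0 η ⊆ (fun q => dist q p) '' S := by
    intro ρ hρ
    obtain ⟨q, hq, hqS⟩ := hcon ρ hρ
    exact ⟨q, hqS, hq⟩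
  have hc := (hS.image (fun q => dist q p)).mono hsub
  have := Cardinal.Real.Ioo_countable_iff.1 hc
  linarith

lemma stay_in {U : Set E2} {u : E2 → ℝ} (hu : AnalyticOnNhd ℝ u U)
    {z₀ : E2} (hcrit : gradient u z₀ = 0)
    {σ : ℝ} (hball : closedBall z₀ σ ⊆ U)
    {K : Set E2} (hKo : IsOpen K) {γ₁ γ₂ : ℝ → E2}
    (hd₁ : ∀ b, Traj u γ₁ 0 b) (hd₂ : ∀ b, Traj u γ₂ 0 b)
    (hsub₁ : γ₁ '' Ici 0 ⊆ frontier K) (hsub₂ : γ₂ '' Ici 0 ⊆ frontier K)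
    (hfr : frontier K ∩ ball z₀ σ ⊆ γ₁ '' Ici 0 ∪ γ₂ '' Ici 0 ∪ {z₀})
    {ε : ℝ} (hεσ : ε ≤ σ)
    (h1 : dist (γ₁ 0) z₀ < ε → γ₁ 0 = z₀) (h2 : dist (γ₂ 0) z₀ < ε → γ₂ 0 = z₀)
    {γ : ℝ → E2} {b : ℝ} (hT : Traj u γ 0 b) (hb : 0 ≤ b) (h0 : γ 0 ∈ K)
    (hin : ∀ t ∈ Icc 0 b, dist (γ t) z₀ < ε) : ∀ t ∈ Icc 0 b, γ t ∈ K := by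
  by_contra! hcon
  obtain ⟨t₁, ht₁, ht₁K⟩ := hcon
  let S := Icc 0 b ∩ γ ⁻¹' Kᶜ
  have hSc : IsCompact S := by
    have : IsClosed S :=
      hT.continuousOn.preimage_isClosed_of_isClosed isClosed_Icc hKo.isClosed_compl
    exact isCompact_Icc.of_isClosed_subset this inter_subset_left
  obtain ⟨t, ht⟩ := hSc.exists_isLeast ⟨t₁, ht₁, ht₁K⟩
  have htI : t ∈ Icc 0 b := ht.1.1
  have htK : γ t ∉ K := ht.1.2
  have hlt : ∀ s ∈ Ico 0 t, γ s ∈ K := by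
    intro s hs
    by_contra hc
    have := ht.2 (⟨⟨hs.1, hs.2.le.trans htI.2⟩, hc⟩ : s ∈ S)
    exact absurd hs.2 (not_lt.2 this)
  have htpos : 0 < t := by
    rcases htI.1.lt_or_eq with h | h
    · exact h
    · rw [← h] at htK; exact absurd h0 htK
  have hTt : Traj u γ 0 t := hT.mono le_rfl htI.2
  have hfront : γ t ∈ frontier K := by
    rw [hKo.frontier_eq]
    refine ⟨?_, htK⟩
    have hc : ContinuousWithinAt γ (Ico 0 t) t :=
      (hTt t ⟨htpos.le, le_rfl⟩).continuousWithinAt.mono Ico_subset_Icc_self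
    have hcl : t ∈ closure (Ico 0 t) := by
      rw [closure_Ico htpos.ne]; exact ⟨htpos.le, le_rfl⟩
    exact hc.mem_closure hcl hlt
  have hana : AnalyticAt ℝ u (γ t) :=
    hu _ (hball (mem_closedBall.2 ((hin t htI).le.trans hεσ)))
  have finish : ∀ β : ℝ → E2, ∀ a, 0 ≤ a → a < t → Traj u β a t → γ t = β t →
      (∀ s ∈ Icc a t, β s ∈ frontier K) → False := by
    intro β a ha hat hβ he hβf
    obtain ⟨l, hl, hle⟩ := local_back hat hana (hTt.mono ha le_rfl) hβ he
    have hm := hlt l ⟨ha.trans hl.1, hl.2⟩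
    have := hβf l ⟨hl.1, hl.2.le⟩
    rw [← hle, hKo.frontier_eq] at this
    exact this.2 hm
  have fin0 : γ t = z₀ → False := by
    intro he
    refine finish (fun _ => z₀) 0 le_rfl htpos ?_ he (fun s _ => he ▸ hfront)
    intro s _
    simp only [hcrit, neg_zero]
    exact hasDerivWithinAt_const _ _ _
  have fini : ∀ β : ℝ → E2, (∀ b, Traj u β 0 b) → β '' Ici 0 ⊆ frontier K →
      (dist (β 0) z₀ < ε → β 0 = z₀) → γ t ∈ β '' Ici 0 → False := by
    rintro β hβ hβf hβ0 ⟨s, hs, hse⟩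
    rcases (mem_Ici.1 hs).lt_or_eq with hpos | h
    · refine finish (fun x => β (x + (s - t))) (t - min s t) (by have := min_le_right s t; linarith)
        (by have := lt_min hpos htpos; linarith) ?_ (by simp [hse]) ?_
      · have := (hβ s).shift (s - t)
        refine this.mono ?_ (by linarith)
        have := min_le_left s t; linarith
      · intro x hx
        refine hβf ⟨x + (s - t), ?_, rfl⟩
        have := min_le_left s t
        have := hx.1
        simp only [mem_Ici]; linarith
    · rw [← h] at hse
      have := hin t htI
      rw [← hse] at this
      exact fin0 (hse ▸ hβ0 this)
  rcases hfr ⟨hfront, mem_ball.2 ((hin t htI).trans_le hεσ)⟩ with (h | h) | h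
  · exact fini γ₁ hd₁ hsub₁ h1 h
  · exact fini γ₂ hd₂ hsub₂ h2 h
  · exact fin0 h

lemma converge_of_good {u : E2 → ℝ} {γ : ℝ → E2} {p : E2}
    (hT : ∀ b, Traj u γ 0 b) (hd : ∀ t ∈ Ici (0:ℝ), DifferentiableAt ℝ u (γ t))
    (hup : ContinuousAt u p) (hcl : MapClusterPt p atTop γ) (hgood : GoodPt u p) :
    Tendsto γ atTop (𝓝 p) := by
  have hanti : ∀ s t, 0 ≤ s → s ≤ t → u (γ t) ≤ u (γ s) := fun s t hs hst =>
    (hT t).antitone (fun x hx => hd x hx.1) ⟨hs, hst⟩ ⟨hs.trans hst, le_rfl⟩ hst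
  have hge : ∀ t, 0 ≤ t → u p ≤ u (γ t) := by
    intro t ht
    by_contra! hlt
    have h1 := hcl.frequently (hup.eventually (lt_mem_nhds hlt))
    obtain ⟨s, hs1, hs2⟩ := (h1.and_eventually (eventually_ge_atTop t)).exists
    have := hanti t s ht hs2
    linarith
  obtain ⟨c, hc, θ, hθ0, hθ1, hev⟩ := hgood
  obtain ⟨r, hr, hb⟩ := Metric.eventually_nhds_iff.1 hev
  rw [Metric.tendsto_atTop']
  intro η' hη'
  set η := min η' r with hη
  have hηpos : 0 < η := lt_min hη' hr
  have e1 : ∀ᶠ z in 𝓝 p, dist z p < η / 2 := Metric.ball_mem_nhds p (by linarith)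
  have e2 := eventually_small_bound (c := c) (θ := θ) (η := η / 2) hθ1 (by linarith) hup.tendsto
  obtain ⟨t0, ⟨h1, h2⟩, h0⟩ :=
    ((hcl.frequently (e1.and e2)).and_eventually (eventually_ge_atTop 0)).exists
  refine ⟨t0, fun t ht => lt_of_lt_of_le ?_ (min_le_left η' r)⟩
  by_contra hcon
  rw [← hη, not_lt] at hcon
  have hTt : Traj u γ t0 t := (hT t).mono h0 le_rfl
  obtain ⟨a, ha, hat, hae, hal⟩ := first_time (f := fun t => dist (γ t) p) (d := η) ht.le
    (hTt.contDist _) (by linarith) hcon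
  have hlen := length_bound (κ := u p) hc hθ0 hθ1 ha.1 (hTt.mono le_rfl ha.2)
    (fun s hs => hd s (h0.trans hs.1)) (fun s hs => hge s (h0.trans hs.1))
    (fun s hs => hb ((hal s hs).trans_le (min_le_right η' r)))
  have htri := dist_triangle (γ a) (γ t0) p
  linarith

lemma converge {u : E2 → ℝ} {γ : ℝ → E2} {z₀ : E2} {ρ r : ℝ}
    (hana : ∀ z ∈ closedBall z₀ ρ, AnalyticAt ℝ u z) (hρr : ρ < r)
    (hcount : {p | p ∈ ball z₀ r ∧ ¬ GoodPt u p}.Countable)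
    (hT : ∀ b, Traj u γ 0 b) (hin : ∀ t ∈ Ici (0:ℝ), γ t ∈ closedBall z₀ ρ) :
    ∃ p, Tendsto γ atTop (𝓝 p) := by
  have hd : ∀ t ∈ Ici (0:ℝ), DifferentiableAt ℝ u (γ t) := fun t ht =>
    (hana _ (hin t ht)).differentiableAt
  have hevin : ∀ᶠ t in atTop, γ t ∈ closedBall z₀ ρ := by
    filter_upwards [eventually_ge_atTop 0] with t ht using hin t ht
  have hclin : ∀ p, MapClusterPt p atTop γ → p ∈ closedBall z₀ ρ := by
    intro p hp
    by_contra hnot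
    have h1 := hp.frequently (isClosed_closedBall.isOpen_compl.mem_nhds hnot)
    obtain ⟨t, ht1, ht2⟩ := (h1.and_eventually hevin).exists
    exact ht1 ht2
  obtain ⟨p, hpin, hp⟩ :=
    (isCompact_closedBall z₀ ρ).exists_mapClusterPt_of_frequently hevin.frequently
  by_cases hex : ∃ q, MapClusterPt q atTop γ ∧ GoodPt u q
  · obtain ⟨q, hq, hgood⟩ := hex
    exact ⟨q, converge_of_good hT hd (hana q (hclin q hq)).continuousAt hq hgood⟩
  · push Not at hex
    refine ⟨p, ?_⟩
    by_contra hnot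
    rw [Metric.tendsto_nhds] at hnot
    push Not at hnot
    obtain ⟨η, hη, hfreq⟩ := hnot
    obtain ⟨ρ', hρ', hsph⟩ := exists_radius hcount p hη
    have hfs : ∃ᶠ t in atTop, γ t ∈ sphere p ρ' := by
      rw [Filter.frequently_atTop]
      intro N
      obtain ⟨t1, ht1, ht1N⟩ := ((hp.frequently (Metric.ball_mem_nhds p hρ'.1)).and_eventually
        (eventually_ge_atTop (max N 0))).exists
      obtain ⟨t2, ht2, ht2N⟩ := (hfreq.and_eventually (eventually_ge_atTop t1)).exists
      have h0 : 0 ≤ t1 := (le_max_right N 0).trans ht1N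
      obtain ⟨a, ha, -, hae, -⟩ := first_time (f := fun t => dist (γ t) p) (d := ρ') ht2N
        (((hT t2).mono h0 le_rfl).contDist _) ht1
        (by have := hρ'.2; linarith)
      exact ⟨a, ((le_max_left N 0).trans ht1N).trans ha.1, hae⟩
    obtain ⟨q, hq, hqcl⟩ := (isCompact_sphere p ρ').exists_mapClusterPt_of_frequently hfs
    exact hsph q hq ⟨mem_ball.2 ((mem_closedBall.1 (hclin q hqcl)).trans_lt hρr), hex q hqcl⟩


/-- Stability of a critical point of a real-analytic function from within a curvilinear
sector `K` bounded by two gradient-descent trajectories converging to the critical point,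
on which `u` is bounded below by its critical value. -/
theorem sector_stability_of_critical_point
    (U : Set E2) (hUo : IsOpen U)
    (u : E2 → ℝ) (hu : AnalyticOnNhd ℝ u U)
    (z₀ : E2) (hz₀ : z₀ ∈ U) (hcrit : gradient u z₀ = 0)
    (σ : ℝ) (hσ : 0 < σ) (hball : closedBall z₀ σ ⊆ U)
    (K : Set E2) (hKo : IsOpen K) (hKge : ∀ z ∈ K, u z₀ ≤ u z)
    (γ₁ γ₂ : ℝ → E2)
    (hd₁ : ∀ t ∈ Ici (0:ℝ), HasDerivWithinAt γ₁ (-(gradient u (γ₁ t))) (Ici 0) t)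
    (hd₂ : ∀ t ∈ Ici (0:ℝ), HasDerivWithinAt γ₂ (-(gradient u (γ₂ t))) (Ici 0) t)
    (hlim₁ : Tendsto γ₁ atTop (𝓝 z₀)) (hlim₂ : Tendsto γ₂ atTop (𝓝 z₀))
    (hsub₁ : γ₁ '' Ici 0 ⊆ frontier K) (hsub₂ : γ₂ '' Ici 0 ⊆ frontier K)
    (hfr : frontier K ∩ ball z₀ σ ⊆ γ₁ '' Ici 0 ∪ γ₂ '' Ici 0 ∪ {z₀}) :
    ∀ ε, 0 < ε → ε ≤ σ →
      ∃ δ > 0,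
        (∀ T : ℝ, 0 < T → ∀ z ∈ K ∩ ball z₀ δ, ∀ γ : ℝ → E2, γ 0 = z →
          (∀ t ∈ Ico (0:ℝ) T, HasDerivWithinAt γ (-(gradient u (γ t))) (Ico 0 T) t) →
          ∀ t ∈ Ico (0:ℝ) T, γ t ∈ K ∧ dist (γ t) z₀ < ε) ∧
        (∀ z ∈ K ∩ ball z₀ δ, ∀ γ : ℝ → E2, γ 0 = z →
          (∀ t ∈ Ici (0:ℝ), HasDerivWithinAt γ (-(gradient u (γ t))) (Ici 0) t) →
          (∀ t ∈ Ici (0:ℝ), γ t ∈ K ∧ dist (γ t) z₀ < ε) ∧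
            ∃ zlim ∈ closure K, dist zlim z₀ ≤ ε ∧ Tendsto γ atTop (𝓝 zlim)) := by
  intro ε hε hεσ
  have hT₁ : ∀ b, Traj u γ₁ 0 b := fun b t ht => (hd₁ t ht.1).mono Icc_subset_Ici_self
  have hT₂ : ∀ b, Traj u γ₂ 0 b := fun b t ht => (hd₂ t ht.1).mono Icc_subset_Ici_self
  obtain ⟨r, hr, hcount⟩ := countable_bad (hu z₀ hz₀)
  have hstart : ∀ w : E2, ∃ d > 0, dist w z₀ < d → w = z₀ := by
    intro w
    by_cases hw : w = z₀
    · exact ⟨1, one_pos, fun _ => hw⟩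
    · exact ⟨dist w z₀, dist_pos.2 hw, fun h => absurd h (lt_irrefl _)⟩
  obtain ⟨d₁, hd₁pos, h1⟩ := hstart (γ₁ 0)
  obtain ⟨d₂, hd₂pos, h2⟩ := hstart (γ₂ 0)
  obtain ⟨ρ, hρ, hsph⟩ := exists_radius hcount z₀
    (show 0 < min (min ε r) (min d₁ d₂) from lt_min (lt_min hε hr) (lt_min hd₁pos hd₂pos))
  have hρε : ρ < ε := hρ.2.trans_le ((min_le_left _ _).trans (min_le_left _ _))
  have hρr : ρ < r := hρ.2.trans_le ((min_le_left _ _).trans (min_le_right _ _))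
  have hρ1 : ρ < d₁ := hρ.2.trans_le ((min_le_right _ _).trans (min_le_left _ _))
  have hρ2 : ρ < d₂ := hρ.2.trans_le ((min_le_right _ _).trans (min_le_right _ _))
  have hana : ∀ z ∈ closedBall z₀ ρ, AnalyticAt ℝ u z := fun z hz =>
    hu z (hball (closedBall_subset_closedBall (by linarith) hz))
  have hsphc : ∀ q ∈ sphere z₀ ρ, q ∈ closedBall z₀ ρ := fun q hq => sphere_subset_closedBall hq
  have hev := (isCompact_sphere z₀ ρ).eventually_forall_of_forall_eventually
    (x₀ := z₀) (P := fun z q => ¬ ∃ b : ℝ, 0 ≤ b ∧ ∃ γ : ℝ → E2, γ 0 = z ∧ γ b = q ∧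
      Traj u γ 0 b ∧ (∀ t ∈ Icc 0 b, DifferentiableAt ℝ u (γ t)) ∧
      (∀ t ∈ Icc 0 b, u z₀ ≤ u (γ t)))
    (fun q hq => no_arrival (hu z₀ hz₀).continuousAt (hana q (hsphc q hq)).continuousAt
      (by rintro rfl; have := hρ.1; simp at hq; linarith)
      (by
        by_contra hbad
        refine hsph q hq ⟨mem_ball.2 ?_, hbad⟩
        rw [mem_sphere.1 hq]; exact hρr))
  obtain ⟨δ₀, hδ₀, hδ⟩ := Metric.eventually_nhds_iff.1 hev
  -- the main trapping claim
  have main : ∀ z ∈ K ∩ ball z₀ (min δ₀ ρ), ∀ γ : ℝ → E2, γ 0 = z → ∀ b, 0 ≤ b → Traj u γ 0 b →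
      ∀ t ∈ Icc 0 b, γ t ∈ K ∧ dist (γ t) z₀ < ρ := by
    rintro z ⟨hzK, hzb⟩ γ h0 b hb hT
    have hzb1 : dist z z₀ < δ₀ := (mem_ball.1 hzb).trans_le (min_le_left _ _)
    have hzb2 : dist z z₀ < ρ := (mem_ball.1 hzb).trans_le (min_le_right _ _)
    have hstay : ∀ b', 0 ≤ b' → b' ≤ b → (∀ t ∈ Icc 0 b', dist (γ t) z₀ < ρ) →
        ∀ t ∈ Icc 0 b', γ t ∈ K := fun b' hb'0 hb' hin =>
      stay_in hu hcrit hball hKo hT₁ hT₂ hsub₁ hsub₂ hfr (by linarith : ρ ≤ σ)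
        (fun h => h1 (h.trans hρ1)) (fun h => h2 (h.trans hρ2)) (hT.mono le_rfl hb') hb'0
        (h0 ▸ hzK) hin
    have hdist : ∀ t ∈ Icc 0 b, dist (γ t) z₀ < ρ := by
      by_contra! hcon
      obtain ⟨t₁, ht₁, hge⟩ := hcon
      have hT1 : Traj u γ 0 t₁ := hT.mono le_rfl ht₁.2
      obtain ⟨a, ha, hapos, hae, hal⟩ := first_time (f := fun t => dist (γ t) z₀) (d := ρ) ht₁.1
        (hT1.contDist _) (by simp only [h0]; exact hzb2) hge
      have hTa : Traj u γ 0 a := hT1.mono le_rfl ha.2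
      have hca : ∀ t ∈ Icc 0 a, γ t ∈ closedBall z₀ ρ := by
        intro t ht
        rcases ht.2.lt_or_eq with h | h
        · exact (hal t ⟨ht.1, h⟩).le
        · rw [h]; exact hae.le
      have hlev : ∀ t ∈ Ico 0 a, u z₀ ≤ u (γ t) := fun t ht =>
        hKge _ (hstay t ht.1 (ht.2.le.trans (ha.2.trans ht₁.2))
          (fun s hs => hal s ⟨hs.1, hs.2.trans_lt ht.2⟩) t ⟨ht.1, le_rfl⟩)
      refine hδ hzb1 (γ a) hae ⟨a, hapos.le, γ, h0, rfl, hTa,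
        fun t ht => (hana _ (hca t ht)).differentiableAt, ?_⟩
      have hcont : ContinuousOn (fun t => u (γ t)) (Icc 0 a) := fun t ht =>
        (hana _ (hca t ht)).continuousAt.comp_continuousWithinAt (hTa t ht).continuousWithinAt
      intro t ht
      have hcl := closure_Ico hapos.ne
      have hcw : ContinuousWithinAt (fun t => u (γ t)) (Ico 0 a) t :=
        (hcont t ht).mono Ico_subset_Icc_self
      have := hcw.mem_closure (t := Ici (u z₀)) (by rw [hcl]; exact ht) (fun s hs => hlev s hs)
      rwa [isClosed_Ici.closure_eq] at this
    exact fun t ht => ⟨hstay b hb le_rfl hdist t ht, hdist t ht⟩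
  refine ⟨min δ₀ ρ, lt_min hδ₀ hρ.1, ?_, ?_⟩
  · intro T hTpos z hz γ h0 hγ t ht
    have hT : Traj u γ 0 t := fun s hs =>
      (hγ s ⟨hs.1, hs.2.trans_lt ht.2⟩).mono fun x hx => ⟨hx.1, hx.2.trans_lt ht.2⟩
    have := main z hz γ h0 t ht.1 hT t ⟨ht.1, le_rfl⟩
    exact ⟨this.1, this.2.trans hρε⟩
  · intro z hz γ h0 hγ
    have hT : ∀ b, Traj u γ 0 b := fun b t ht => (hγ t ht.1).mono Icc_subset_Ici_self
    have hall : ∀ t ∈ Ici (0:ℝ), γ t ∈ K ∧ dist (γ t) z₀ < ρ := fun t ht =>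
      main z hz γ h0 t ht (hT t) t ⟨ht, le_rfl⟩
    refine ⟨fun t ht => ⟨(hall t ht).1, (hall t ht).2.trans hρε⟩, ?_⟩
    obtain ⟨p, hp⟩ := converge hana hρr hcount hT (fun t ht => mem_closedBall.2 (hall t ht).2.le)
    have hevK : ∀ᶠ t in atTop, γ t ∈ K ∧ dist (γ t) z₀ < ρ := by
      filter_upwards [eventually_ge_atTop 0] with t ht using hall t ht
    refine ⟨p, mem_closure_of_tendsto hp (hevK.mono fun t ht => ht.1), ?_, hp⟩
    exact le_of_tendsto (hp.dist tendsto_const_nhds)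
      (hevK.mono fun t ht => (ht.2.trans hρε).le)
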